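/- Let γ > 0. For every t > 0 one has σ_pp(t) > 0 and σ_qq(t) σ_pp(t) − σ_qp(t)² > 0; in particular the covariance matrix Σ(t) is positive definite (hence invertible). -/

import Mathlib

/-!
With `x = γ t / 2` one finds `σ_pp = 2 exp (-2 x) sinh (2 x)` and
`det Σ = 16 exp (-2 x) sinh x (x cosh x - sinh x) / γ ^ 2`. Since `tanh x < x` for `x > 0` and both
`sinh x` and `x cosh x - sinh x` are odd, the determinant is positive whenever `x ≠ 0`.
Positive definiteness is then Sylvester's criterion, read off from the factorization
`A = Uᴴ * diag (det A / A₁₁, A₁₁) * U` of a Hermitian `2 × 2` matrix with `U` unitriangular.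
-/

open Matrix in
/-- Covariance matrix `Σ(t)` of the Gaussian fundamental solution of the kinetic
Fokker–Planck equation of 1D Langevin dynamics with constant potential and `β = 1`. -/
noncomputable def covMat (γ t : ℝ) : Matrix (Fin 2) (Fin 2) ℝ :=
  !![(2 / γ ^ 2) * (γ * t - 3 / 2 + 2 * Real.exp (-γ * t) - Real.exp (-2 * γ * t) / 2),
     (1 - Real.exp (-γ * t)) ^ 2 / γ;
     (1 - Real.exp (-γ * t)) ^ 2 / γ,
     1 - Real.exp (-2 * γ * t)]

/-- Mean vector `M(t,q₀,p₀)` of the Gaussian fundamental solution. -/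
noncomputable def meanVec (γ t q₀ p₀ : ℝ) : Fin 2 → ℝ :=
  ![q₀ + p₀ * (1 - Real.exp (-γ * t)) / γ, p₀ * Real.exp (-γ * t)]

open Matrix in
/-- The Gaussian fundamental solution
`F(t,q,p;q₀,p₀) = (2π √(det Σ(t)))⁻¹ exp(−½ (z−M)ᵀ Σ(t)⁻¹ (z−M))` with `z = (q,p)`. -/
noncomputable def Fsol (γ t q p q₀ p₀ : ℝ) : ℝ :=
  (2 * Real.pi * Real.sqrt (covMat γ t).det)⁻¹ *
    Real.exp (-(1 / 2) *
      ((![q, p] - meanVec γ t q₀ p₀) ⬝ᵥ ((covMat γ t)⁻¹ *ᵥ (![q, p] - meanVec γ t q₀ p₀))))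

section Hyperbolic

open Real

lemma sinh_lt_self_mul_cosh {x : ℝ} (hx : 0 < x) : sinh x < x * cosh x := by
  have h_log : 2 * (exp (2 * x) - 1) / (exp (2 * x) + 1) < 2 * x := by
    have h := lt_log_one_add_of_pos (sub_pos.2 (one_lt_exp_iff.2 (mul_pos two_pos hx)))
    rw [add_sub_cancel, log_exp] at h
    convert h using 2
    ring
  have h_sinh : exp (2 * x) - 1 = 2 * exp x * sinh x := by
    rw [sinh_eq, two_mul, exp_add, exp_neg]
    field_simp
  have h_cosh : exp (2 * x) + 1 = 2 * exp x * cosh x := by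
    rw [cosh_eq, two_mul, exp_add, exp_neg]
    field_simp
  have h_cosh_pos := cosh_pos x
  rw [h_sinh, h_cosh, div_lt_iff₀ (by positivity)] at h_log
  refine lt_of_mul_lt_mul_left ?_ (show 0 ≤ 4 * exp x by positivity)
  linarith

lemma sinh_mul_self_mul_cosh_sub_sinh_pos {x : ℝ} (hx : x ≠ 0) :
    0 < sinh x * (x * cosh x - sinh x) := by
  rcases hx.lt_or_gt with hneg | hpos
  · have h := sinh_lt_self_mul_cosh (neg_pos.2 hneg)
    rw [sinh_neg, cosh_neg] at h
    exact mul_pos_of_neg_of_neg (sinh_neg_iff.2 hneg) (by linarith)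
  · exact mul_pos (sinh_pos_iff.2 hpos) (sub_pos.2 (sinh_lt_self_mul_cosh hpos))

end Hyperbolic

section FinTwo

open Matrix

lemma eq_star_mul_diagonal_mul_of_isHermitian {K : Type*} [Field K] [StarRing K]
    {A : Matrix (Fin 2) (Fin 2) K} (hA : A.IsHermitian) (h₁₁ : A 1 1 ≠ 0) :
    A = star !![1, 0; A 1 0 / A 1 1, 1] * diagonal ![A.det / A 1 1, A 1 1] *
      !![1, 0; A 1 0 / A 1 1, 1] := by
  have h_star₁₁ : star (A 1 1) = A 1 1 := hA.apply 1 1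
  have h_star₁₀ : star (A 1 0) = A 0 1 := hA.apply 0 1
  have h_star : star !![1, 0; A 1 0 / A 1 1, 1] = !![1, A 0 1 / A 1 1; 0, 1] := by
    ext i j
    fin_cases i <;> fin_cases j <;> simp [star_apply, h_star₁₁, h_star₁₀]
  have h_diag : diagonal ![A.det / A 1 1, A 1 1] = !![A.det / A 1 1, 0; 0, A 1 1] := by
    ext i j
    fin_cases i <;> fin_cases j <;> simp
  have h₀₀ : A 0 0 = A.det / A 1 1 + A 0 1 * (A 1 0 / A 1 1) := by
    rw [det_fin_two]
    field_simp
    ring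
  rw [h_star, h_diag, mul_fin_two, mul_fin_two]
  simp only [one_mul, mul_one, zero_mul, mul_zero, zero_add, add_zero, div_mul_cancel₀ _ h₁₁,
    mul_div_cancel₀ _ h₁₁, ← h₀₀]
  exact A.eta_fin_two

open scoped ComplexOrder in
lemma posDef_fin_two_iff {𝕜 : Type*} [RCLike 𝕜] {A : Matrix (Fin 2) (Fin 2) 𝕜}
    (hA : A.IsHermitian) : A.PosDef ↔ 0 < A 1 1 ∧ 0 < A.det := by
  refine ⟨fun h ↦ ⟨h.diag_pos, h.det_pos⟩, fun ⟨h₁₁, h_det⟩ ↦ ?_⟩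
  have hU : IsUnit !![1, 0; A 1 0 / A 1 1, 1] := by
    simp [isUnit_iff_isUnit_det]
  rw [eq_star_mul_diagonal_mul_of_isHermitian hA h₁₁.ne',
    IsUnit.posDef_star_left_conjugate_iff hU, posDef_diagonal_iff, Fin.forall_fin_two]
  exact ⟨div_pos h_det h₁₁, h₁₁⟩

end FinTwo

section Covariance

variable {γ t : ℝ}

lemma isHermitian_covMat (γ t : ℝ) : (covMat γ t).IsHermitian := by
  ext i j
  fin_cases i <;> fin_cases j <;> simp [covMat]

lemma exp_neg_two_mul_mul (γ t : ℝ) : Real.exp (-2 * γ * t) = Real.exp (-γ * t) ^ 2 := by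
  rw [← Real.exp_nat_mul]
  congr 1
  push_cast
  ring

lemma covMat_one_one (γ t : ℝ) :
    covMat γ t 1 1 = 2 * Real.exp (-(γ * t)) * Real.sinh (γ * t) := by
  have h_inv : Real.exp (-(γ * t)) * Real.exp (γ * t) = 1 := by
    rw [← Real.exp_add, neg_add_cancel, Real.exp_zero]
  simp only [covMat, Matrix.of_apply, Matrix.cons_val', Matrix.cons_val_one,
    Matrix.cons_val_fin_one]
  rw [exp_neg_two_mul_mul, neg_mul, Real.sinh_eq]
  linear_combination -h_inv

lemma covMat_one_one_pos (h : 0 < γ * t) : 0 < covMat γ t 1 1 := by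
  rw [covMat_one_one]
  exact mul_pos (by positivity) (Real.sinh_pos_iff.2 h)

lemma det_covMat (hγ : γ ≠ 0) (t : ℝ) :
    (covMat γ t).det = 16 / γ ^ 2 * Real.exp (-(γ * t)) *
      (Real.sinh (γ * t / 2) *
        (γ * t / 2 * Real.cosh (γ * t / 2) - Real.sinh (γ * t / 2))) := by
  obtain ⟨x, rfl⟩ : ∃ x, t = 2 * x / γ := ⟨γ * t / 2, by field_simp⟩
  have h_half : γ * (2 * x / γ) / 2 = x := by field_simp
  have h_exp : Real.exp (-γ * (2 * x / γ)) = (Real.exp x)⁻¹ ^ 2 := by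
    rw [← Real.exp_neg, ← Real.exp_nat_mul]
    congr 1
    field_simp
    ring
  rw [Matrix.det_fin_two]
  simp only [covMat, Matrix.of_apply, Matrix.cons_val', Matrix.cons_val_zero, Matrix.cons_val_one,
    Matrix.cons_val_fin_one]
  rw [h_half, exp_neg_two_mul_mul, ← neg_mul, h_exp, Real.sinh_eq, Real.cosh_eq, Real.exp_neg]
  field_simp
  ring

lemma det_covMat_pos (hγ : γ ≠ 0) (ht : t ≠ 0) : 0 < (covMat γ t).det := by
  rw [det_covMat hγ]
  exact mul_pos (by positivity) (sinh_mul_self_mul_cosh_sub_sinh_pos (by positivity))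

end Covariance

theorem stmt8_general (γ t : ℝ) (h : 0 < γ * t) :
    0 < covMat γ t 1 1
    ∧ 0 < covMat γ t 0 0 * covMat γ t 1 1 - (covMat γ t 0 1) ^ 2
    ∧ (covMat γ t).PosDef
    ∧ IsUnit (covMat γ t).det := by
  have h_pp := covMat_one_one_pos h
  have h_det := det_covMat_pos (left_ne_zero_of_mul h.ne') (right_ne_zero_of_mul h.ne')
  have h_symm : covMat γ t 1 0 = covMat γ t 0 1 := (isHermitian_covMat γ t).apply 0 1
  refine ⟨h_pp, ?_, (posDef_fin_two_iff (isHermitian_covMat γ t)).2 ⟨h_pp, h_det⟩, h_det.ne'.isUnit⟩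
  rwa [Matrix.det_fin_two, h_symm, ← sq] at h_det

/-- For every `t > 0`, `σ_pp(t) > 0` and `σ_qq(t) σ_pp(t) − σ_qp(t)² > 0`; in particular
the covariance matrix `Σ(t)` is positive definite, hence invertible. -/
theorem stmt8 (γ : ℝ) (hγ : 0 < γ) :
    ∀ t : ℝ, 0 < t →
      0 < covMat γ t 1 1
      ∧ 0 < covMat γ t 0 0 * covMat γ t 1 1 - (covMat γ t 0 1) ^ 2
      ∧ (covMat γ t).PosDef
      ∧ IsUnit (covMat γ t).det := by
  intro t ht
  exact stmt8_general γ t (mul_pos hγ ht)
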